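/- arXiv:2204.07033 — 4 statements merged into one kernel-verified Lean document; each statement's English description precedes it below -/
import Mathlib

section
/- For every integer i ≥ 1, the vertical segment S = {(0, y) : -1 ≤ y < 0} is a connected component of the space V_i (i.e., S is exactly the connected component of the point r = (0,-1) in V_i). -/
open Real Set

/-- The deleted topologist's sine curve `T`. -/
def T : Set (ℝ × ℝ) :=
  {p : ℝ × ℝ | (0 < p.1 ∧ p.1 ≤ 1 ∧ p.2 = Real.sin (1 / p.1)) ∨
    (p.1 = 0 ∧ -1 ≤ p.2 ∧ p.2 < 0)}

def r : ℝ × ℝ := (0, -1)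

noncomputable def s : ℝ × ℝ := (1, Real.sin 1)

def V : Set (ℝ × ℝ) := T ∩ {p : ℝ × ℝ | p.2 < 0}

def Vi (i : ℕ) : Set (ℝ × ℝ) := V ∪ (T ∩ {p : ℝ × ℝ | p.1 > 1 / (i : ℝ)})

lemma r_mem_T : r ∈ T := Or.inr ⟨rfl, le_refl _, by norm_num [r]⟩

lemma r_mem_Vi (i : ℕ) : r ∈ Vi i := Or.inl ⟨r_mem_T, by norm_num [r]⟩

lemma s_mem_T : s ∈ T := Or.inl ⟨one_pos, le_refl _, by norm_num [s]⟩

lemma s_mem_Vi {i : ℕ} (hi : 2 ≤ i) : s ∈ Vi i := by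
  refine Or.inr ⟨s_mem_T, ?_⟩
  have h2 : (1 : ℝ) < i := by exact_mod_cast lt_of_lt_of_le one_lt_two (by exact_mod_cast hi)
  show (1 : ℝ) / (i : ℝ) < s.1
  rw [show s.1 = 1 from rfl, div_lt_one (by linarith)]
  exact h2

lemma Vi_mono {i j : ℕ} (hi : 1 ≤ i) (hij : i ≤ j) : Vi i ⊆ Vi j := by
  apply Set.union_subset_union_right
  apply Set.inter_subset_inter_right
  intro p hp
  have hi' : (0 : ℝ) < i := by exact_mod_cast hi
  have hij' : (i : ℝ) ≤ j := by exact_mod_cast hij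
  exact lt_of_le_of_lt (one_div_le_one_div_of_le hi' hij') hp

/-!
The first coordinate maps the component of `r` onto an interval containing `0`. Arbitrarily small
`x > 0` with `sin (1 / x) = 1` are missed by the first projection of `Vi i`, because the curve point
over such an `x ≤ 1 / i` is neither below the axis nor to the right of `1 / i`. Hence that interval
contains no positive number, and the component lies on the vertical axis.
-/

open Filter Topology

section Order

variable {α : Type*} [LinearOrder α] [TopologicalSpace α]

lemma le_of_ordConnected_of_frequently_notMem [ClosedIciTopology α] {u : Set α}
    (hu : u.OrdConnected) {a b : α} (ha : a ∈ u) (hb : b ∈ u) (hgap : ∃ᶠ c in 𝓝[>] a, c ∉ u) :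
    b ≤ a := by
  by_contra! hab
  obtain ⟨c, hcu, hac, hcb⟩ := (hgap.and_eventually (Ioo_mem_nhdsGT hab)).exists
  exact hcu (hu.out ha hb ⟨hac.le, hcb.le⟩)

lemma le_of_mem_connectedComponentIn_of_frequently_notMem_image [OrderClosedTopology α]
    {X : Type*} [TopologicalSpace X] {F : Set X} {f : X → α} (hf : ContinuousOn f F) {x y : X}
    (hgap : ∃ᶠ c in 𝓝[>] f x, c ∉ f '' F) (hy : y ∈ connectedComponentIn F x) :
    f y ≤ f x := by
  have hx : x ∈ F := connectedComponentIn_nonempty_iff.mp ⟨y, hy⟩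
  have hsub : connectedComponentIn F x ⊆ F := connectedComponentIn_subset F x
  have himage : IsPreconnected (f '' connectedComponentIn F x) :=
    isPreconnected_connectedComponentIn.image f (hf.mono hsub)
  exact le_of_ordConnected_of_frequently_notMem himage.ordConnected
    (mem_image_of_mem f (mem_connectedComponentIn hx)) (mem_image_of_mem f hy)
    (hgap.mono fun _ hc hmem => hc (image_mono hsub hmem))

end Order

lemma frequently_atTop_eq_of_periodic {α β : Type*} [AddCommGroup α] [LinearOrder α]
    [IsOrderedAddMonoid α] [Archimedean α] {f : α → β} {c : α} (hf : Function.Periodic f c)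
    (hc : 0 < c) (x : α) : ∃ᶠ y in atTop, f y = f x := by
  have htranslates : Tendsto (fun n : ℕ => x + n • c) atTop atTop :=
    tendsto_atTop_add_const_left _ x (tendsto_id.atTop_nsmul_const hc)
  exact htranslates.frequently (Frequently.of_forall fun n => hf.nsmul n x)

lemma frequently_sin_one_div_eq_sin (θ : ℝ) : ∃ᶠ x in 𝓝[>] (0 : ℝ), sin (1 / x) = sin θ := by
  refine tendsto_inv_atTop_nhdsGT_zero.frequently ?_
  simpa only [one_div, inv_inv] using
    frequently_atTop_eq_of_periodic sin_periodic two_pi_pos θ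

lemma notMem_image_fst_Vi {i : ℕ} {x : ℝ} (hx : 0 < x) (hxi : x ≤ 1 / i)
    (hsin : 0 ≤ sin (1 / x)) : x ∉ Prod.fst '' Vi i := by
  rintro ⟨p, ⟨⟨-, -, hp⟩ | ⟨hp, -⟩, hneg⟩ | ⟨-, hgt⟩, rfl⟩
  · exact (hp ▸ hsin).not_gt hneg
  · exact hx.ne' hp
  · exact hxi.not_gt hgt

lemma frequently_notMem_image_fst_Vi {i : ℕ} (hi : 1 ≤ i) :
    ∃ᶠ x in 𝓝[>] (0 : ℝ), x ∉ Prod.fst '' Vi i := by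
  have hbound : (0 : ℝ) < 1 / i := one_div_pos.mpr (by exact_mod_cast hi)
  refine ((frequently_sin_one_div_eq_sin (π / 2)).and_eventually
    (Ioc_mem_nhdsGT hbound)).mono ?_
  rintro x ⟨hsin, hx, hxi⟩
  exact notMem_image_fst_Vi hx hxi (by rw [hsin, sin_pi_div_two]; exact zero_le_one)

lemma Vi_inter_fst_nonpos (i : ℕ) :
    Vi i ∩ {p | p.1 ≤ 0} = {p : ℝ × ℝ | p.1 = 0 ∧ -1 ≤ p.2 ∧ p.2 < 0} := by
  ext p
  constructor
  · rintro ⟨hp, hle⟩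
    have hpT : p ∈ T := hp.elim And.left And.left
    exact hpT.resolve_left fun hcurve => hle.not_gt hcurve.1
  · intro hp
    exact ⟨Or.inl ⟨Or.inr hp, hp.2.2⟩, hp.1.le⟩

lemma isPreconnected_Vi_inter_fst_nonpos (i : ℕ) :
    IsPreconnected (Vi i ∩ {p | p.1 ≤ 0}) := by
  have hprod : Vi i ∩ {p | p.1 ≤ 0} = {0} ×ˢ Ico (-1) 0 := Vi_inter_fst_nonpos i
  rw [hprod]
  exact isPreconnected_singleton.prod isPreconnected_Ico

/-- For every `i ≥ 1`, the segment `S = {(0,y) : -1 ≤ y < 0}` is exactly the connected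
component of `r = (0,-1)` in the space `Vi i`. -/
theorem stmt_5 : ∀ i : ℕ, 1 ≤ i →
    connectedComponentIn (Vi i) r =
      {p : ℝ × ℝ | p.1 = 0 ∧ -1 ≤ p.2 ∧ p.2 < 0} := by
  intro i hi
  rw [← Vi_inter_fst_nonpos i]
  apply Subset.antisymm
  · intro p hp
    have hle : p.1 ≤ r.1 := le_of_mem_connectedComponentIn_of_frequently_notMem_image
      continuousOn_fst (frequently_notMem_image_fst_Vi hi) hp
    exact ⟨connectedComponentIn_subset _ _ hp, hle⟩
  · exact (isPreconnected_Vi_inter_fst_nonpos i).subset_connectedComponentIn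
      ⟨r_mem_Vi i, show r.1 ≤ 0 from le_rfl⟩ inter_subset_left
end

section
/- For every integer i ≥ 1, the set of connected components of the space V_i is countably infinite. -/
open Real Set

/-!
`T` is a continuous image of the disjoint union of two intervals, a locally connected separable
space. An open part of `T` is therefore the image of an open part of that union, which again is
locally connected and separable and so has only countably many components.

For infinitude, project to the `x`-axis. A crest of the sine curve has `y = 1`, so it survives in
`V_i` only if its abscissa exceeds `1 / i`; all but finitely many crests are removed, whereas every
trough remains. The image of a component is an interval avoiding the removed crests, so distinct
troughs far enough to the left lie in distinct components.
-/

section ConnectedComponents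

open TopologicalSpace

variable {X Y α : Type*} [TopologicalSpace X] [TopologicalSpace Y]

lemma countable_connectedComponents [LocallyConnectedSpace X] [SeparableSpace X] :
    Countable (ConnectedComponents X) :=
  separableSpace_iff_countable.1 ConnectedComponents.isQuotientMap_coe.separableSpace

lemma countable_connectedComponents_range_inter [LocallyConnectedSpace Y] [SeparableSpace Y]
    {g : Y → X} (hg : Continuous g) {W : Set X} (hW : IsOpen W) :
    Countable (ConnectedComponents ↥(range g ∩ W)) := by
  have hU : IsOpen (g ⁻¹' W) := hW.preimage hg
  have := hU.locallyConnectedSpace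
  have := hU.isOpenEmbedding_subtypeVal.separableSpace
  have := countable_connectedComponents (X := g ⁻¹' W)
  let restricted : g ⁻¹' W → ↥(range g ∩ W) := fun y ↦ ⟨g y, mem_range_self _, y.2⟩
  have continuous_restricted : Continuous restricted := by fun_prop
  have surjective_restricted : restricted.Surjective := by
    rintro ⟨_, ⟨y, rfl⟩, hy⟩
    exact ⟨⟨y, hy⟩, rfl⟩
  exact (continuous_restricted.connectedComponentsMap_surjective surjective_restricted).countable

variable [LinearOrder α] [TopologicalSpace α] [OrderClosedTopology α] {f : X → α}

lemma connectedComponents_mk_ne_of_notMem_range (hf : Continuous f) {x y : X} {c : α}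
    (hc : c ∉ range f) (hx : f x < c) (hy : c < f y) :
    ConnectedComponents.mk x ≠ ConnectedComponents.mk y := by
  intro h
  obtain ⟨z, -, hz⟩ := isPreconnected_connectedComponent.intermediate_value
    (ConnectedComponents.coe_eq_coe'.1 h) mem_connectedComponent hf.continuousOn ⟨hx.le, hy.le⟩
  exact hc ⟨z, hz⟩

lemma infinite_connectedComponents_of_gaps (hf : Continuous f) {u : ℕ → X} {c : ℕ → α}
    (hc : ∀ n, c n ∉ range f) (hlt : ∀ n, f (u (n + 1)) < c n) (hgt : ∀ n, c n < f (u n)) :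
    Infinite (ConnectedComponents X) := by
  have hanti : StrictAnti (f ∘ u) := strictAnti_nat_of_succ_lt fun n ↦ (hlt n).trans (hgt n)
  refine Infinite.of_injective (fun n ↦ ConnectedComponents.mk (u n))
    (.of_lt_imp_ne fun m n hmn ↦ Ne.symm ?_)
  have hn : f (u n) < c m := (hanti.antitone (Nat.succ_le_of_lt hmn)).trans_lt (hlt m)
  exact connectedComponents_mk_ne_of_notMem_range hf (hc m) hn (hgt m)

end ConnectedComponents

/-- A parametrization of `T` by two disjoint intervals: the abscissa runs over the sine curve, the
ordinate over the vertical segment. -/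
noncomputable def sineCurveParam : Ioc (0 : ℝ) 1 ⊕ Ico (-1 : ℝ) 0 → ℝ × ℝ :=
  Sum.elim (fun x ↦ (x, sin (1 / x))) (fun y ↦ (0, y))

lemma continuous_sineCurveParam : Continuous sineCurveParam := by
  have hne (x : Ioc (0 : ℝ) 1) : (x : ℝ) ≠ 0 := x.2.1.ne'
  unfold sineCurveParam
  fun_prop (disch := assumption)

lemma range_sineCurveParam : range sineCurveParam = T := by
  ext ⟨x, y⟩
  simp [sineCurveParam, T, and_assoc, eq_comm]

lemma countable_connectedComponents_T_inter {W : Set (ℝ × ℝ)} (hW : IsOpen W) :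
    Countable (ConnectedComponents ↥(T ∩ W)) := by
  have := (convex_Ioc (0 : ℝ) 1).locallyPathConnectedSpace
  have := (convex_Ico (-1 : ℝ) 0).locallyPathConnectedSpace
  rw [← range_sineCurveParam]
  exact countable_connectedComponents_range_inter continuous_sineCurveParam hW

/-- The abscissa of the `n`-th crest (point with `y = 1`) of the sine curve, counted from the
right. -/
noncomputable def crest (n : ℕ) : ℝ := 1 / (π / 2 + n * (2 * π))

/-- The abscissa of the `n`-th trough (point with `y = -1`) of the sine curve, counted from the
right; it lies between the crests `n + 1` and `n`. -/
noncomputable def trough (n : ℕ) : ℝ := 1 / (3 * π / 2 + n * (2 * π))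

lemma crest_pos (n : ℕ) : 0 < crest n := by
  unfold crest
  positivity

lemma sin_one_div_crest (n : ℕ) : sin (1 / crest n) = 1 := by
  rw [crest, one_div_one_div, sin_add_nat_mul_two_pi, sin_pi_div_two]

lemma sin_one_div_trough (n : ℕ) : sin (1 / trough n) = -1 := by
  rw [trough, one_div_one_div, sin_add_nat_mul_two_pi, show 3 * π / 2 = π / 2 + π by ring,
    sin_add_pi, sin_pi_div_two]

lemma crest_succ_lt_trough (n : ℕ) : crest (n + 1) < trough n := by
  refine one_div_lt_one_div_of_lt (by positivity) ?_
  push_cast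
  linarith [pi_pos]

lemma trough_lt_crest (n : ℕ) : trough n < crest n :=
  one_div_lt_one_div_of_lt (by positivity) (by linarith [pi_pos])

lemma tendsto_crest : Filter.Tendsto crest Filter.atTop (nhds 0) := by
  unfold crest
  simp only [one_div]
  exact (Filter.tendsto_atTop_add_const_left _ _
    (tendsto_natCast_atTop_atTop.atTop_mul_const two_pi_pos)).inv_tendsto_atTop

lemma trough_mem_Ioc (n : ℕ) : trough n ∈ Ioc 0 1 := by
  have hle : 1 ≤ 3 * π / 2 + n * (2 * π) := by
    have : 0 ≤ n * (2 * π) := by positivity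
    linarith [pi_gt_three]
  exact ⟨one_div_pos.2 (by linarith), div_le_one_of_le₀ hle (by linarith)⟩

lemma trough_mem_V (n : ℕ) : (trough n, -1) ∈ V :=
  ⟨Or.inl ⟨(trough_mem_Ioc n).1, (trough_mem_Ioc n).2, (sin_one_div_trough n).symm⟩,
    (neg_one_lt_zero : (-1 : ℝ) < 0)⟩

lemma snd_eq_one_of_fst_eq_crest {p : ℝ × ℝ} (hp : p ∈ T) {n : ℕ} (h : p.1 = crest n) :
    p.2 = 1 := by
  rcases hp with ⟨-, -, hy⟩ | ⟨hx, -, -⟩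
  · rw [hy, h, sin_one_div_crest]
  · exact absurd (h.symm.trans hx) (crest_pos n).ne'

lemma fst_ne_crest {a : ℝ} {n : ℕ} (hn : crest n < a) {p : ℝ × ℝ}
    (hp : p ∈ V ∪ (T ∩ {p | p.1 > a})) : p.1 ≠ crest n := by
  intro h
  rcases hp with ⟨hT, hy⟩ | ⟨-, hx⟩
  · rw [mem_ofPred_eq, snd_eq_one_of_fst_eq_crest hT h] at hy
    exact zero_lt_one.not_gt hy
  · rw [mem_ofPred_eq, h] at hx
    exact hn.not_gt hx

theorem stmt_9_general {a : ℝ} (ha : 0 < a) :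
    Countable (ConnectedComponents ↥(V ∪ (T ∩ {p | p.1 > a}))) ∧
      Infinite (ConnectedComponents ↥(V ∪ (T ∩ {p | p.1 > a}))) := by
  constructor
  · rw [V, ← inter_union_distrib_left]
    exact countable_connectedComponents_T_inter
      ((isOpen_lt continuous_snd continuous_const).union
        (isOpen_lt continuous_const continuous_fst))
  · obtain ⟨N, hN⟩ := Filter.eventually_atTop.1 (tendsto_crest.eventually_lt_const ha)
    refine infinite_connectedComponents_of_gaps (continuous_fst.comp continuous_subtype_val)
      (u := fun k ↦ ⟨(trough (N + k), -1), Or.inl (trough_mem_V _)⟩)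
      (c := fun k ↦ crest (N + k + 1)) ?_ ?_ ?_
    · rintro k ⟨p, hp⟩
      exact fst_ne_crest (hN _ (by omega)) p.2 hp
    · exact fun k ↦ trough_lt_crest (N + k + 1)
    · exact fun k ↦ crest_succ_lt_trough (N + k)

/-- For every `i ≥ 1`, the set of connected components of `Vi i` is countably infinite. -/
theorem stmt_9 : ∀ i : ℕ, 1 ≤ i →
    Countable (ConnectedComponents (Vi i)) ∧ Infinite (ConnectedComponents (Vi i)) := by
  intro i hi
  exact stmt_9_general (one_div_pos.2 (Nat.cast_pos.2 hi))
end

section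
/- For every integer i ≥ 2, there exists a subset U of the space V_i that is both open and closed in V_i, with r = (0,-1) ∈ U and s = (1, sin 1) ∉ U. (In particular, r and s lie in different quasi-components of V_i.) -/
open Real Set

/-!
Since `sin (1 / x)` takes the value `1` at points `a` arbitrarily close to `0`, some such `a` lies
below `1 / i`. The only point of `T` over `a` is the peak `(a, 1)`, which is missing from `Vi i`:
it is too high for `V` and too far left for the rest. The vertical line over `a` therefore cuts
`Vi i` into two relatively open pieces, with `r` on the left and `s` on the right.
-/

lemma isClopen_setOf_lt_of_forall_ne {X α : Type*} [TopologicalSpace X] [TopologicalSpace α]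
    [LinearOrder α] [OrderClosedTopology α] {f g : X → α} (hf : Continuous f) (hg : Continuous g)
    (hne : ∀ x, f x ≠ g x) : IsClopen {x | f x < g x} := by
  have hfrontier : frontier {x | f x < g x} ⊆ {x | f x = g x} := frontier_lt_subset_eq hf hg
  exact isClopen_iff_frontier_eq_empty.2 <|
    eq_empty_of_forall_notMem fun x hx => hne x (hfrontier hx)

lemma exists_mem_Ioo_sin_one_div_eq {ε y : ℝ} (hε : 0 < ε) (hy : y ∈ Icc (-1) 1) :
    ∃ a ∈ Ioo 0 ε, sin (1 / a) = y := by
  obtain ⟨θ, ⟨hθ, -⟩, hsin⟩ := sin_periodic.exists_mem_Ioc two_pi_pos (arcsin y) (1 / ε)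
  have hθ_pos : 0 < θ := (one_div_pos.2 hε).trans hθ
  refine ⟨1 / θ, ⟨one_div_pos.2 hθ_pos, (one_div_lt hθ_pos hε).2 hθ⟩, ?_⟩
  rw [one_div_one_div, ← hsin, sin_arcsin hy.1 hy.2]

lemma snd_eq_sin_of_mem_T {p : ℝ × ℝ} (hp : p ∈ T) (hpos : 0 < p.1) : p.2 = sin (1 / p.1) := by
  rcases hp with ⟨-, -, hsin⟩ | ⟨hzero, -, -⟩
  · exact hsin
  · exact absurd hzero hpos.ne'

lemma fst_ne_of_mem_Vi {i : ℕ} {a : ℝ} (ha : a ∈ Ioc 0 (1 / (i : ℝ))) (hsin : 0 ≤ sin (1 / a))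
    {p : ℝ × ℝ} (hp : p ∈ Vi i) : p.1 ≠ a := by
  rintro rfl
  rcases hp with ⟨hT, hneg : p.2 < 0⟩ | ⟨-, hright : 1 / (i : ℝ) < p.1⟩
  · exact hneg.not_ge (snd_eq_sin_of_mem_T hT ha.1 ▸ hsin)
  · exact hright.not_ge ha.2

/-- For every `i ≥ 2`, there is a clopen subset `U` of `Vi i` containing `r = (0,-1)`
but not `s = (1, sin 1)`; in particular `r` and `s` lie in different quasi-components. -/
theorem stmt_10 : ∀ i : ℕ, ∀ hi : 2 ≤ i, ∃ U : Set (Vi i),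
    IsClopen U ∧ (⟨r, r_mem_Vi i⟩ : Vi i) ∈ U ∧ (⟨s, s_mem_Vi hi⟩ : Vi i) ∉ U := by
  intro i hi
  have hi_inv_pos : 0 < 1 / (i : ℝ) := Nat.one_div_cast_pos (by lia)
  obtain ⟨a, ha, hsin⟩ :=
    exists_mem_Ioo_sin_one_div_eq hi_inv_pos (right_mem_Icc.2 (by norm_num : (-1 : ℝ) ≤ 1))
  have hne (p : Vi i) : p.1.1 ≠ a :=
    fst_ne_of_mem_Vi (Ioo_subset_Ioc_self ha) (zero_le_one.trans_eq hsin.symm) p.2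
  have ha_lt_one : a < 1 := ha.2.trans_le (sub_nonneg.1 (Nat.one_sub_one_div_cast_nonneg i))
  exact ⟨{p | p.1.1 < a},
    isClopen_setOf_lt_of_forall_ne (by fun_prop) continuous_const hne, ha.1, ha_lt_one.not_gt⟩
end

section
/- Let p be a prime. The inverse system of groups of locally constant functions (LocallyConstant V_n (ZMod p))_{n ≥ 1}, with restriction maps, fails the Mittag-Leffler condition; more precisely: for every i ≥ 1 and every j ≥ i there exists k ≥ j such that the range of the restriction homomorphism LocallyConstant V_k (ZMod p) → LocallyConstant V_i (ZMod p) is strictly contained in the range of the restriction homomorphism LocallyConstant V_j (ZMod p) → LocallyConstant V_i (ZMod p). -/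
open Real Set

/-- Restriction of locally constant functions along the inclusion `Vi i ⊆ Vi j`,
as an additive group homomorphism. -/
noncomputable def resHom (p : ℕ) {i j : ℕ} (h : Vi i ⊆ Vi j) :
    LocallyConstant (Vi j) (ZMod p) →+ LocallyConstant (Vi i) (ZMod p) :=
  LocallyConstant.comapAddMonoidHom ⟨Set.inclusion h, continuous_inclusion h⟩

/-! Write `T` as the curve `t ↦ (1 / t, sin t)` plus a segment. Given `j`, choose `u < t < v` with
`1 ≤ u`, `j ≤ t`, `sin t = 0`, `sin u < 0` and `sin v < 0`. The points of the curve at `u` and `v`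
lie below the axis, hence in every `V_i`, while the point at `t` is missing from `V_j`. So the line
`x = 1 / t` cuts `V_j` into two clopen parts, and some locally constant function on `V_j` separates
the two points. As soon as `k > v`, the whole arc from `u` to `v` lies in `V_k`, so that no locally
constant function on `V_k` separates them. -/

section LocallyConstant

variable {W X Z : Type*} [TopologicalSpace W] [TopologicalSpace X] [TopologicalSpace Z]

lemma exists_locallyConstant_ne_of_isClopen (Y : Type*) [Nontrivial Y] {U : Set X}
    (hU : IsClopen U) {x x' : X} (hx : x ∈ U) (hx' : x' ∉ U) :
    ∃ f : LocallyConstant X Y, f x ≠ f x' := by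
  classical
  obtain ⟨a, b, hab⟩ := exists_pair_ne Y
  exact ⟨(LocallyConstant.ofIsClopen hU).map ![a, b],
    by simpa [LocallyConstant.ofIsClopen, hx, hx'] using hab⟩

lemma isClopen_preimage_val_setOf_lt {α : Type*} [TopologicalSpace α] [LinearOrder α]
    [OrderClosedTopology α] {f : X → α} (hf : Continuous f) {A : Set X} {a : α}
    (ha : a ∉ f '' A) : IsClopen ((↑) ⁻¹' {x | a < f x} : Set A) :=
  isClopen_preimage_val (isOpen_lt continuous_const hf) <|
    disjoint_left.2 fun x hx hxA =>
      ha ⟨x, hxA, (frontier_lt_subset_eq continuous_const hf hx).symm⟩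

lemma range_locallyConstant_comap_comp_ssubset (Y : Type*) [Nontrivial Y] (f : C(W, X))
    (g : C(X, Z)) {U : Set X} (hU : IsClopen U) {w w' : W} (hw : f w ∈ U) (hw' : f w' ∉ U)
    (hgf : g (f w') ∈ connectedComponent (g (f w))) :
    range (LocallyConstant.comap (g.comp f) : LocallyConstant Z Y → LocallyConstant W Y) ⊂
      range (LocallyConstant.comap f : LocallyConstant X Y → LocallyConstant W Y) := by
  rw [LocallyConstant.comap_comp]
  refine ssubset_iff_exists.2 ⟨range_comp_subset_range _ _, ?_⟩
  obtain ⟨e, he⟩ := exists_locallyConstant_ne_of_isClopen Y hU hw hw'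
  refine ⟨_, mem_range_self e, ?_⟩
  rintro ⟨h, hhe⟩
  have h_eq : h (g (f w)) = h (g (f w')) :=
    h.isLocallyConstant.apply_eq_of_isPreconnected isPreconnected_connectedComponent
      mem_connectedComponent hgf
  exact he ((LocallyConstant.congr_fun hhe w).symm.trans
    (h_eq.trans (LocallyConstant.congr_fun hhe w')))

end LocallyConstant

/-- The parametrization `t ↦ (1 / t, sin t)` of the oscillating part of `T`, which is traced out
as `t` ranges over `1 ≤ t`; large `t` is close to the segment of `T` on the line `x = 0`. -/
noncomputable def sineCurve (t : ℝ) : ℝ × ℝ := (1 / t, sin t)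

lemma continuousOn_sineCurve : ContinuousOn sineCurve {0}ᶜ :=
  (continuousOn_const.div continuousOn_id fun _ ht => ht).prodMk continuous_sin.continuousOn

lemma sineCurve_mem_T {t : ℝ} (ht : 1 ≤ t) : sineCurve t ∈ T :=
  Or.inl ⟨one_div_pos.2 (by linarith), (div_le_one (by linarith)).2 ht, by simp [sineCurve]⟩

lemma eq_sineCurve_of_mem_T {q : ℝ × ℝ} (hq : q ∈ T) (hq₀ : 0 < q.1) : q = sineCurve (1 / q.1) := by
  rcases hq with ⟨-, -, hsin⟩ | ⟨hzero, -⟩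
  · exact Prod.ext (one_div_one_div _).symm hsin
  · exact absurd hzero hq₀.ne'

lemma Vi_subset_T (i : ℕ) : Vi i ⊆ T :=
  union_subset inter_subset_left inter_subset_left

lemma sineCurve_mem_Vi_iff {i : ℕ} (hi : 1 ≤ i) {t : ℝ} (ht : 1 ≤ t) :
    sineCurve t ∈ Vi i ↔ sin t < 0 ∨ t < i := by
  have hT := sineCurve_mem_T ht
  have hlt : 1 / (i : ℝ) < 1 / t ↔ t < i :=
    one_div_lt_one_div (by exact_mod_cast hi) (by linarith)
  rw [← hlt]
  exact or_congr (and_iff_right hT) (and_iff_right hT)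

lemma one_div_notMem_fst_image_Vi {j : ℕ} (hj : 1 ≤ j) {t : ℝ} (hjt : j ≤ t) (hsin : 0 ≤ sin t) :
    1 / t ∉ Prod.fst '' Vi j := by
  rintro ⟨q, hq, hqt⟩
  have ht : 1 ≤ t := le_trans (by exact_mod_cast hj) hjt
  have hq_eq : q = sineCurve t := by
    rw [eq_sineCurve_of_mem_T (Vi_subset_T j hq) (hqt ▸ one_div_pos.2 (by linarith)), hqt,
      one_div_one_div]
  rw [hq_eq, sineCurve_mem_Vi_iff hj ht] at hq
  exact hq.elim hsin.not_gt hjt.not_gt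

lemma joinedIn_Vi_sineCurve {k : ℕ} {u v : ℝ} (hu : 1 ≤ u) (huv : u ≤ v) (hvk : v < k) :
    JoinedIn (Vi k) (sineCurve u) (sineCurve v) := by
  have hk : 1 ≤ k := by exact_mod_cast (hu.trans huv).trans hvk.le
  have hpath : IsPathConnected (sineCurve '' Icc u v) :=
    ((convex_Icc u v).isPathConnected (nonempty_Icc.2 huv)).image' <|
      continuousOn_sineCurve.mono fun t ht => (zero_lt_one.trans_le (hu.trans ht.1)).ne'
  refine (hpath.joinedIn _ (mem_image_of_mem _ (left_mem_Icc.2 huv)) _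
    (mem_image_of_mem _ (right_mem_Icc.2 huv))).mono ?_
  rintro _ ⟨t, ht, rfl⟩
  exact (sineCurve_mem_Vi_iff hk (hu.trans ht.1)).2 (Or.inr (ht.2.trans_lt hvk))

/-- Restriction of `Y`-valued locally constant functions along `Vi i ⊆ Vi j`, for an arbitrary
set `Y` of values; for `Y = ZMod p` it is the function underlying `resHom p`. -/
def restrictVi (Y : Type*) {i j : ℕ} (h : Vi i ⊆ Vi j) :
    LocallyConstant (Vi j) Y → LocallyConstant (Vi i) Y :=
  LocallyConstant.comap (ContinuousMap.inclusion h)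

lemma range_restrictVi_ssubset (Y : Type*) [Nontrivial Y] {i j k : ℕ} (hi : 1 ≤ i) (hij : i ≤ j)
    (hjk : j ≤ k) {t u v : ℝ} (hu : 1 ≤ u) (hut : u < t) (htv : t < v) (hvk : v < k) (hjt : j ≤ t)
    (hsin_u : sin u < 0) (hsin_t : 0 ≤ sin t) (hsin_v : sin v < 0) :
    range (restrictVi Y (Vi_mono hi (hij.trans hjk))) ⊂ range (restrictVi Y (Vi_mono hi hij)) := by
  have hj := hi.trans hij
  have hmem_u : sineCurve u ∈ Vi i := (sineCurve_mem_Vi_iff hi hu).2 (Or.inl hsin_u)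
  have hmem_v : sineCurve v ∈ Vi i := (sineCurve_mem_Vi_iff hi (by linarith)).2 (Or.inl hsin_v)
  have hclopen := isClopen_preimage_val_setOf_lt continuous_fst
    (one_div_notMem_fst_image_Vi hj hjt hsin_t)
  have hu_right : 1 / t < (sineCurve u).1 := one_div_lt_one_div_of_lt (by linarith) hut
  have hv_left : (sineCurve v).1 < 1 / t := one_div_lt_one_div_of_lt (by linarith) htv
  have hjoined := (joinedIn_Vi_sineCurve hu (hut.trans htv).le hvk).joined_subtype
  exact range_locallyConstant_comap_comp_ssubset Y (ContinuousMap.inclusion (Vi_mono hi hij))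
    (ContinuousMap.inclusion (Vi_mono hj hjk)) hclopen (w := ⟨_, hmem_u⟩) (w' := ⟨_, hmem_v⟩)
    hu_right hv_left.not_gt (pathComponent_subset_component _ hjoined)

lemma exists_sin_neg_sin_eq_zero_sin_neg (a : ℝ) :
    ∃ u t v : ℝ, a ≤ u ∧ u < t ∧ t < v ∧ sin u < 0 ∧ sin t = 0 ∧ sin v < 0 := by
  obtain ⟨n, hn⟩ := exists_nat_gt (a + 2)
  have hn_le : (n : ℝ) ≤ n * (2 * π) := le_mul_of_one_le_right n.cast_nonneg <| by
    linarith [pi_gt_three]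
  have hsin_t : sin (n * (2 * π)) = 0 := by simpa using (sin_periodic.nat_mul n) 0
  have hsin_u : sin (n * (2 * π) - π / 2) = -1 := by
    rw [sin_sub_pi_div_two, cos_nat_mul_two_pi]
  have hsin_v : sin (n * (2 * π) - π / 2 + 2 * π) = -1 := by rw [sin_add_two_pi, hsin_u]
  refine ⟨n * (2 * π) - π / 2, n * (2 * π), n * (2 * π) - π / 2 + 2 * π, ?_, ?_, ?_, ?_, hsin_t, ?_⟩
  all_goals linarith [pi_pos, pi_div_two_le_two]

theorem stmt_11_general (Y : Type*) [Nontrivial Y] {i j : ℕ} (hi : 1 ≤ i) (hij : i ≤ j) :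
    ∃ k : ℕ, ∃ hjk : j ≤ k,
      range (restrictVi Y (Vi_mono hi (hij.trans hjk))) ⊂
        range (restrictVi Y (Vi_mono hi hij)) := by
  obtain ⟨u, t, v, hju, hut, htv, hsin_u, hsin_t, hsin_v⟩ := exists_sin_neg_sin_eq_zero_sin_neg j
  obtain ⟨k, hvk⟩ := exists_nat_gt v
  have hu : 1 ≤ u := le_trans (by exact_mod_cast hi.trans hij) hju
  have hjt : (j : ℝ) ≤ t := hju.trans hut.le
  have hjk : j ≤ k := by exact_mod_cast hjt.trans (htv.trans hvk).le
  exact ⟨k, hjk,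
    range_restrictVi_ssubset Y hi hij hjk hu hut htv hvk hjt hsin_u hsin_t.ge hsin_v⟩

/-- The tower `(LocallyConstant (Vi n) (ZMod p))` with restriction maps fails the
Mittag-Leffler condition: for every `i ≥ 1` and `j ≥ i` there is `k ≥ j` such that the
range of restriction from level `k` to level `i` is strictly contained in the range of
restriction from level `j` to level `i`. -/
theorem stmt_11 (p : ℕ) (hp : p.Prime) :
    ∀ i : ℕ, ∀ hi : 1 ≤ i, ∀ j : ℕ, ∀ hij : i ≤ j, ∃ k : ℕ, ∃ hjk : j ≤ k,
      Set.range (⇑(resHom p (Vi_mono hi (hij.trans hjk)))) ⊂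
        Set.range (⇑(resHom p (Vi_mono hi hij))) := by
  have : Fact p.Prime := ⟨hp⟩
  exact fun i hi j hij => stmt_11_general (ZMod p) hi hij
end
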